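/- (Bimesh Lemma, part 1.) Let Δ be a translation quiver and x, y vertices such that every path from x to y is closed; fix a mesh-lexicographic order on the paths from x to y. Suppose x is non-injective and there is at least one arrow starting at x and ending at a predecessor of y, and let α_1 : x → x_1 be the largest such arrow with respect to the order <_{ε_x} induced on arrows starting at x. Set S = {r ∈ R_x : there is no s ∈ R(τ^{-1}x, y) with lp(r) = lp(s_{α_1})}. Then every r ∈ R_x is a linear combination of elements of R^d(τ^{-1}x, y) ∪ S. -/

import Mathlib

/-!
Write `x = τ w`, and for a path `γ : w ⇝ y` let `r_γ = γ m_x`. Fix the length of `γ`; as the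
quiver is locally finite there are finitely many paths `w ⇝ y` of that length, and the
lexicographic order is a strict order, so one may induct on `γ` along the order of the paths
`γ (σ⁻¹ α₁) α₁` (`TranslationQuiver.wellFounded_lexLt_comp`).

If `r_γ ∈ S` there is nothing to do. Otherwise the leading path of `r_γ` is that of some
`s_{α₁}`, where `s = γ₂ m_z γ₁` is a sum of the paths `δ_β = γ₂ β (σ β) γ₁` over the arrows `β`
ending at `τ⁻¹ z`. Comparing the first two arrows shows `γ = δ_{β₀}` for some `β₀`, and then
`δ_β (σ⁻¹ α₁) α₁ < γ (σ⁻¹ α₁) α₁` for `β ≠ β₀`, since the right-hand side is the leading path of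
`s_{α₁}`. Exchanging sums gives the bimesh identity `∑_α s_α = ∑_β r_{δ_β}`
(`TranslationQuiver.sum_derComesh`), whence `r_γ = ∑_α s_α - ∑_{β ≠ β₀} r_{δ_β}`, and the
induction hypothesis applies to each `r_{δ_β}`.
-/

/-!
Translation quivers, paths, mesh relations, mesh-canonical relations,
(mesh-)lexicographic orders, walks and homotopy, following
Chaio–Le Meur–Trepode and Riedtmann/Bongartz–Gabriel.
-/

/-- A (locally finite) translation quiver: a quiver without loops with a partially
defined injective translation `tau` (defined exactly on the non-projective vertices;
the vertices outside its range are the injective ones) and, for every non-projective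
vertex `w` and every vertex `u`, a bijection `sigma` from the arrows `u ⟶ w` to the
arrows `tau w ⟶ u`. -/
structure TranslationQuiver where
  V : Type
  Arrow : V → V → Type
  fintypeHom : ∀ a b : V, Fintype (Arrow a b)
  fintypeOut : ∀ a : V, Fintype ((b : V) × Arrow a b)
  fintypeIn : ∀ a : V, Fintype ((b : V) × Arrow b a)
  noLoops : ∀ a : V, IsEmpty (Arrow a a)
  /-- `Proj x` means that the vertex `x` is projective. -/
  Proj : V → Prop
  tau : {x : V // ¬ Proj x} → V
  tau_inj : Function.Injective tau
  sigma : ∀ (w : {x : V // ¬ Proj x}) (u : V), Arrow u w.1 ≃ Arrow (tau w) u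

attribute [instance] TranslationQuiver.fintypeHom TranslationQuiver.fintypeOut
  TranslationQuiver.fintypeIn

instance (T : TranslationQuiver) : Quiver T.V := ⟨T.Arrow⟩

namespace TranslationQuiver

/-- A vertex is injective iff it is not in the range of the translation. -/
def Inj (T : TranslationQuiver) (x : T.V) : Prop := x ∉ Set.range T.tau

/-- `z` is a predecessor of `y` (there is a path `z ⇝ y`). -/
def PredOf (T : TranslationQuiver) (y z : T.V) : Prop := Nonempty (Quiver.Path z y)

/-- `u` has at least two immediate successors. -/
def TwoSucc (T : TranslationQuiver) (u : T.V) : Prop :=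
  ∃ v v' : T.V, v ≠ v' ∧ Nonempty (T.Arrow u v) ∧ Nonempty (T.Arrow u v')

/-- The closedness condition for two consecutive arrows `u ⟶ v ⟶ w` of a path:
if `w` is non-projective and `τ w = u` then `u` must have at least two
immediate successors. -/
def ClosedCons (T : TranslationQuiver) {u v w : T.V}
    (_e₁ : T.Arrow u v) (_e₂ : T.Arrow v w) : Prop :=
  ∀ hw : ¬ T.Proj w, T.tau ⟨w, hw⟩ = u → T.TwoSucc u

/-- A path is closed if every pair of consecutive arrows satisfies `ClosedCons`. -/
def Closed (T : TranslationQuiver) : ∀ {x y : T.V}, Quiver.Path x y → Prop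
  | _, _, .nil => True
  | _, _, .cons .nil _ => True
  | _, _, .cons (.cons p e₁) e₂ =>
      Closed T (Quiver.Path.cons p e₁) ∧ T.ClosedCons e₁ e₂

/-- The list of vertices visited by a path (from the end vertex backwards). -/
def vertList (T : TranslationQuiver) : ∀ {x y : T.V}, Quiver.Path x y → List T.V
  | _, y, .nil => [y]
  | _, y, .cons p _ => y :: vertList T p

/-- The length-two path `τ w ⟶ u ⟶ w` through the mesh ending at `w`
determined by an arrow `β : u ⟶ w`. -/
def meshPath (T : TranslationQuiver) {w : T.V} (hw : ¬ T.Proj w)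
    (β : (u : T.V) × T.Arrow u w) : Quiver.Path (T.tau ⟨w, hw⟩) w :=
  (Quiver.Hom.toPath (T.sigma ⟨w, hw⟩ β.1 β.2)).cons β.2

/-- The set of mesh-canonical relations between `x` and `y` in `kΔ(x,y)`
(the vector space with basis the paths from `x` to `y`, modelled as finitely
supported functions on paths): the elements `γ₂ m_z γ₁` with `z = τ w`
non-injective, `γ₁ : x ⇝ z` and `γ₂ : τ⁻¹ z = w ⇝ y`. -/
def MeshCanonical (T : TranslationQuiver) (k : Type) [Field k] (x y : T.V) :
    Set (Quiver.Path x y →₀ k) :=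
  { r | ∃ (w : T.V) (hw : ¬ T.Proj w) (γ₁ : Quiver.Path x (T.tau ⟨w, hw⟩))
      (γ₂ : Quiver.Path w y),
      r = ∑ β : (u : T.V) × T.Arrow u w,
        Finsupp.single ((γ₁.comp (meshPath T hw β)).comp γ₂) (1 : k) }

/-- The mesh-canonical relations between `x` and `y` of length `m`. -/
def MeshCanonicalLen (T : TranslationQuiver) (k : Type) [Field k] (x y : T.V) (m : ℕ) :
    Set (Quiver.Path x y →₀ k) :=
  { r | ∃ (w : T.V) (hw : ¬ T.Proj w) (γ₁ : Quiver.Path x (T.tau ⟨w, hw⟩))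
      (γ₂ : Quiver.Path w y),
      γ₁.length + 2 + γ₂.length = m ∧
      r = ∑ β : (u : T.V) × T.Arrow u w,
        Finsupp.single ((γ₁.comp (meshPath T hw β)).comp γ₂) (1 : k) }

/-- The mesh-canonical relations derived from the mesh of `x = τ w`
(those of the form `γ₂ m_x` with `γ₂ : τ⁻¹ x = w ⇝ y`). -/
def MeshAtSet (T : TranslationQuiver) (k : Type) [Field k] {w : T.V}
    (hw : ¬ T.Proj w) (y : T.V) : Set (Quiver.Path (T.tau ⟨w, hw⟩) y →₀ k) :=
  { r | ∃ γ₂ : Quiver.Path w y,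
      r = ∑ β : (u : T.V) × T.Arrow u w,
        Finsupp.single ((meshPath T hw β).comp γ₂) (1 : k) }

/-- For `x = τ w` non-injective, an arrow `a = (α : x ⟶ v)` starting at `x` and
`s ∈ kΔ(w, y)`, the element `s_α = s (σ⁻¹ α) α` of `kΔ(x, y)`. -/
noncomputable def derComesh (T : TranslationQuiver) (k : Type) [Field k] {w : T.V}
    (hw : ¬ T.Proj w) {y : T.V} (a : (v : T.V) × T.Arrow (T.tau ⟨w, hw⟩) v)
    (s : Quiver.Path w y →₀ k) : Quiver.Path (T.tau ⟨w, hw⟩) y →₀ k :=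
  Finsupp.mapDomain
    (fun p => (((Quiver.Hom.toPath a.2).cons ((T.sigma ⟨w, hw⟩ a.1).symm a.2)).comp p)) s

/-- The arrows starting at `z`. -/
abbrev OutArrow (T : TranslationQuiver) (z : T.V) := (v : T.V) × T.Arrow z v

/-- A family of orders, one for each path `γ : x ⇝ z`, on the arrows starting at
the end vertex `z` of `γ`. -/
abbrev OFam (T : TranslationQuiver) (x : T.V) :=
  ∀ z : T.V, Quiver.Path x z → OutArrow T z → OutArrow T z → Prop

/-- `O` is a family of (strict) total orders on the arrows starting at the
end vertices of paths `x ⇝ z` and ending at predecessors of `y`. -/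
def IsOrderFamily (T : TranslationQuiver) (x y : T.V) (O : OFam T x) : Prop :=
  ∀ (z : T.V) (γ : Quiver.Path x z),
    (∀ a : OutArrow T z, ¬ O z γ a a) ∧
    (∀ a b c : OutArrow T z, O z γ a b → O z γ b c → O z γ a c) ∧
    (∀ a b : OutArrow T z, T.PredOf y a.1 → T.PredOf y b.1 → a ≠ b →
      O z γ a b ∨ O z γ b a)

/-- The lexicographic order on the paths from `x` to `y` induced by the family `O`:
`δ < δ'` iff, `γ` being the longest common initial subpath of `δ` and `δ'` and
`a`, `a'` the arrows with which `δ`, `δ'` respectively continue after `γ`,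
one has `a <_γ a'`. -/
def LexLt (T : TranslationQuiver) {x y : T.V} (O : OFam T x)
    (δ δ' : Quiver.Path x y) : Prop :=
  ∃ (z : T.V) (γ : Quiver.Path x z) (a a' : OutArrow T z)
    (δ₁ : Quiver.Path a.1 y) (δ₁' : Quiver.Path a'.1 y),
    a ≠ a' ∧ δ = (γ.cons a.2).comp δ₁ ∧ δ' = (γ.cons a'.2).comp δ₁' ∧ O z γ a a'

/-- The order family `O` is mesh-lexicographic (for paths from `x` to `y`):
it is a family of total orders and, whenever `γ : x ⇝ z` with `z = τ w`
non-injective, `w = τ⁻¹ z` a predecessor of `y`, and `α : z ⟶ z'` the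
`<_γ`-largest arrow starting at `z` and ending at a predecessor of `y`,
the arrow `σ⁻¹ α : z' ⟶ w` is `≤_{αγ} β` for every arrow `β : z' ⟶ v` with `v`
a predecessor of `y`. -/
def IsMeshLex (T : TranslationQuiver) (x y : T.V) (O : OFam T x) : Prop :=
  IsOrderFamily T x y O ∧
  ∀ (w : T.V) (hw : ¬ T.Proj w) (γ : Quiver.Path x (T.tau ⟨w, hw⟩))
    (z' : T.V) (α : T.Arrow (T.tau ⟨w, hw⟩) z'),
    T.PredOf y w → T.PredOf y z' →
    (∀ b : OutArrow T (T.tau ⟨w, hw⟩), T.PredOf y b.1 →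
      b ≠ ⟨z', α⟩ → O _ γ b ⟨z', α⟩) →
    ∀ (v : T.V) (β : T.Arrow z' v), T.PredOf y v →
      (⟨v, β⟩ : OutArrow T z') ≠ ⟨w, (T.sigma ⟨w, hw⟩ z').symm α⟩ →
      O z' (γ.cons α) ⟨w, (T.sigma ⟨w, hw⟩ z').symm α⟩ ⟨v, β⟩

/-- `p` is the leading basis element (the largest path occurring with nonzero
coefficient) of `f ∈ kΔ(x,y)`, with respect to the lexicographic order induced
by the order family `O`. -/
def IsLpPath (T : TranslationQuiver) {k : Type} [Field k] {x y : T.V} (O : OFam T x)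
    (f : Quiver.Path x y →₀ k) (p : Quiver.Path x y) : Prop :=
  f p ≠ 0 ∧ ∀ q : Quiver.Path x y, f q ≠ 0 → q ≠ p → LexLt T O q p

/-- Walks on a translation quiver: formal compositions of arrows and inverses
of arrows. -/
inductive Walk (T : TranslationQuiver) : T.V → T.V → Type
  | nil (a : T.V) : Walk T a a
  | consFwd {a b c : T.V} : Walk T a b → T.Arrow b c → Walk T a c
  | consBwd {a b c : T.V} : Walk T a b → T.Arrow c b → Walk T a c

/-- Composition of walks. -/
def Walk.comp {T : TranslationQuiver} : ∀ {a b c : T.V}, Walk T a b → Walk T b c → Walk T a c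
  | _, _, _, p, .nil _ => p
  | _, _, _, p, .consFwd q e => .consFwd (p.comp q) e
  | _, _, _, p, .consBwd q e => .consBwd (p.comp q) e

/-- A path is in particular a walk. -/
def pathToWalk (T : TranslationQuiver) : ∀ {a b : T.V}, Quiver.Path a b → Walk T a b
  | a, _, .nil => .nil a
  | _, _, .cons p e => .consFwd (pathToWalk T p) e

/-- Homotopy of walks: the smallest equivalence relation such that
(a) `α α⁻¹ ∼ ε` and `α⁻¹ α ∼ ε`; (b) `α (σ α) ∼ α' (σ α')` for arrows `α, α'`
ending at a non-projective vertex; (c) it is compatible with composition; and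
(d) `α ∼ β` for parallel arrows. -/
inductive Homotopic (T : TranslationQuiver) : ∀ {a b : T.V}, Walk T a b → Walk T a b → Prop
  | refl {a b : T.V} (p : Walk T a b) : Homotopic T p p
  | symm {a b : T.V} {p q : Walk T a b} : Homotopic T p q → Homotopic T q p
  | trans {a b : T.V} {p q r : Walk T a b} :
      Homotopic T p q → Homotopic T q r → Homotopic T p r
  | cancel_left {a b : T.V} (e : T.Arrow a b) :
      Homotopic T (((Walk.nil a).consFwd e).consBwd e) (Walk.nil a)
  | cancel_right {a b : T.V} (e : T.Arrow a b) :
      Homotopic T (((Walk.nil b).consBwd e).consFwd e) (Walk.nil b)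
  | mesh {w : T.V} (hw : ¬ T.Proj w) {u u' : T.V} (β : T.Arrow u w) (β' : T.Arrow u' w) :
      Homotopic T
        (((Walk.nil (T.tau ⟨w, hw⟩)).consFwd (T.sigma ⟨w, hw⟩ u β)).consFwd β)
        (((Walk.nil (T.tau ⟨w, hw⟩)).consFwd (T.sigma ⟨w, hw⟩ u' β')).consFwd β')
  | comp_congr {a b c d : T.V} {p q : Walk T b c} (w₁ : Walk T a b) (w₂ : Walk T c d) :
      Homotopic T p q → Homotopic T ((w₁.comp p).comp w₂) ((w₁.comp q).comp w₂)
  | par {a b : T.V} (e e' : T.Arrow a b) :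
      Homotopic T ((Walk.nil a).consFwd e) ((Walk.nil a).consFwd e')

end TranslationQuiver

namespace TranslationQuiver

/-! ### The lexicographic order -/

/-- Of two initial subpaths of the same path, one is an initial subpath of the other. -/
theorem path_prefix_cases {V : Type*} [Quiver V] {a b c y : V} (p : Quiver.Path a b)
    (q : Quiver.Path b y) (p' : Quiver.Path a c) (q' : Quiver.Path c y)
    (h : p.comp q = p'.comp q') :
    (∃ r : Quiver.Path b c, p' = p.comp r ∧ q = r.comp q') ∨
      (∃ r : Quiver.Path c b, p = p'.comp r ∧ q' = r.comp q) := by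
  induction q with
  | nil => exact Or.inr ⟨q', by simpa using h, by simp⟩
  | cons q e ih =>
    cases q' with
    | nil => exact Or.inl ⟨q.cons e, by simpa using h.symm, by simp⟩
    | cons q' e' =>
      rw [Quiver.Path.comp_cons, Quiver.Path.comp_cons] at h
      obtain rfl := Quiver.Path.obj_eq_of_cons_eq_cons h
      have h1 := eq_of_heq (Quiver.Path.heq_of_cons_eq_cons h)
      obtain rfl := eq_of_heq (Quiver.Path.hom_heq_of_cons_eq_cons h)
      rcases ih q' h1 with ⟨r, hr, hr'⟩ | ⟨r, hr, hr'⟩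
      · exact Or.inl ⟨r, hr, by simp [hr']⟩
      · exact Or.inr ⟨r, hr, by simp [hr']⟩

theorem lexLt_trans {T : TranslationQuiver} {x y : T.V} {O : OFam T x}
    (hO : IsOrderFamily T x y O) {p q r : Quiver.Path x y}
    (hpq : LexLt T O p q) (hqr : LexLt T O q r) : LexLt T O p r := by
  obtain ⟨z, γ, a, ⟨v, a'⟩, δ, δ', hne, rfl, rfl, hlt⟩ := hpq
  obtain ⟨z₂, γ₂, ⟨v₂, b⟩, b', η, η', hne₂, h, rfl, hlt₂⟩ := hqr
  dsimp only at *
  rcases path_prefix_cases _ _ _ _ h with ⟨r, hr, -⟩ | ⟨r, hr, -⟩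
  · cases r with
    | nil =>
      cases hr
      have htr := (hO _ _).2.1 _ _ _ hlt hlt₂
      refine ⟨_, _, _, _, _, _, ?_, rfl, rfl, htr⟩
      rintro rfl
      exact (hO _ _).1 _ htr
    | cons r e =>
      cases hr
      exact ⟨z, γ, a, ⟨v, a'⟩, δ, (r.cons b'.2).comp η', hne, rfl,
        by simp [← Quiver.Path.comp_assoc], hlt⟩
  · cases r with
    | nil =>
      cases hr
      have htr := (hO _ _).2.1 _ _ _ hlt hlt₂
      refine ⟨_, _, _, _, _, _, ?_, rfl, rfl, htr⟩
      rintro rfl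
      exact (hO _ _).1 _ htr
    | cons r e =>
      cases hr
      exact ⟨z₂, γ₂, ⟨v₂, b⟩, b', (r.cons a.2).comp δ, η', hne₂,
        by simp [← Quiver.Path.comp_assoc], rfl, hlt₂⟩

theorem lexLt_irrefl {T : TranslationQuiver} {x y : T.V} (O : OFam T x)
    (p : Quiver.Path x y) : ¬ LexLt T O p p := by
  rintro ⟨z, γ, ⟨v, a⟩, ⟨v', a'⟩, δ, δ', hne, rfl, h, -⟩
  dsimp only at *
  rcases path_prefix_cases _ _ _ _ h with ⟨r, hr, -⟩ | ⟨r, hr, -⟩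
  all_goals
    have hlen := congrArg Quiver.Path.length hr
    cases r with
    | nil => cases hr; exact hne rfl
    | cons r e =>
      simp only [Quiver.Path.length_cons, Quiver.Path.length_comp] at hlen
      omega

/-- Local finiteness: there are finitely many paths of a given length between two vertices. -/
theorem finite_path_length (T : TranslationQuiver) (a : T.V) (n : ℕ) :
    ∀ b : T.V, Finite {p : Quiver.Path a b // p.length = n} := by
  induction n with
  | zero =>
    intro b
    refine @Finite.of_subsingleton _ ⟨?_⟩
    rintro ⟨p, hp⟩ ⟨q, hq⟩
    obtain rfl := Quiver.Path.eq_of_length_zero p hp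
    simp [Quiver.Path.eq_nil_of_length_zero p hp, Quiver.Path.eq_nil_of_length_zero q hq]
  | succ n ih =>
    intro b
    let f : ((e : (c : T.V) × T.Arrow c b) × {p : Quiver.Path a e.1 // p.length = n}) →
        {p : Quiver.Path a b // p.length = n + 1} :=
      fun e => ⟨Quiver.Path.cons e.2.1 e.1.2, by simp [e.2.2]⟩
    refine Finite.of_surjective f ?_
    rintro ⟨p, hp⟩
    cases p with
    | nil => simp at hp
    | cons p e => exact ⟨⟨⟨_, e⟩, ⟨p, by simpa using hp⟩⟩, rfl⟩

/-- The lexicographic order need not be well-founded on all paths (they may have unbounded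
lengths), but it is on the paths of a fixed length. -/
theorem wellFounded_lexLt_comp {T : TranslationQuiver} {x y w : T.V} {O : OFam T x}
    (hO : IsOrderFamily T x y O) (π : Quiver.Path x w) (n : ℕ) :
    WellFounded fun p q : {p : Quiver.Path w y // p.length = n} =>
      LexLt T O (π.comp p.1) (π.comp q.1) := by
  have := finite_path_length T w n y
  have : IsTrans {p : Quiver.Path w y // p.length = n}
      fun p q => LexLt T O (π.comp p.1) (π.comp q.1) := ⟨fun _ _ _ h h' => lexLt_trans hO h h'⟩
  have : Std.Irrefl fun p q : {p : Quiver.Path w y // p.length = n} =>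
      LexLt T O (π.comp p.1) (π.comp q.1) := ⟨fun _ => lexLt_irrefl O _⟩
  exact Finite.wellFounded_of_trans_of_irrefl _

/-! ### Relations derived from meshes and comeshes -/

theorem meshPath_injective (T : TranslationQuiver) {w : T.V} (hw : ¬ T.Proj w) :
    Function.Injective (meshPath T hw) := by
  rintro ⟨u, β⟩ ⟨u', β'⟩ h
  simp only [meshPath] at h
  obtain rfl := Quiver.Path.obj_eq_of_cons_eq_cons h
  obtain rfl := eq_of_heq (Quiver.Path.hom_heq_of_cons_eq_cons h)
  rfl

theorem length_meshPath (T : TranslationQuiver) {w : T.V} (hw : ¬ T.Proj w)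
    (β : (u : T.V) × T.Arrow u w) : (meshPath T hw β).length = 2 := rfl

/-- `σ` as a bijection from all arrows ending at `w` to all arrows starting at `τ w`. -/
def sigmaEquiv (T : TranslationQuiver) {w : T.V} (hw : ¬ T.Proj w) :
    ((u : T.V) × T.Arrow u w) ≃ OutArrow T (T.tau ⟨w, hw⟩) :=
  Equiv.sigmaCongrRight fun u => T.sigma ⟨w, hw⟩ u

theorem derComesh_sigmaEquiv (T : TranslationQuiver) (k : Type) [Field k] {w : T.V}
    (hw : ¬ T.Proj w) {y : T.V} (β : (u : T.V) × T.Arrow u w) (s : Quiver.Path w y →₀ k) :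
    derComesh T k hw (sigmaEquiv T hw β) s
      = Finsupp.mapDomain (fun p => (meshPath T hw β).comp p) s := by
  obtain ⟨u, β⟩ := β
  have hσ : sigmaEquiv T hw ⟨u, β⟩ = ⟨u, T.sigma ⟨w, hw⟩ u β⟩ := rfl
  rw [hσ]
  simp only [derComesh, meshPath, Equiv.symm_apply_apply]

/-- The relation `γ m_x`, for `x = τ w` and a path `γ : w ⇝ y`. -/
noncomputable def meshRel (T : TranslationQuiver) (k : Type) [Field k] {w : T.V}
    (hw : ¬ T.Proj w) {y : T.V} (γ : Quiver.Path w y) : Quiver.Path (T.tau ⟨w, hw⟩) y →₀ k :=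
  ∑ β : (u : T.V) × T.Arrow u w, Finsupp.single ((meshPath T hw β).comp γ) (1 : k)

/-- The bimesh identity `∑_α s_α = ∑_i f_i m_x` for `s = ∑_i f_i` a sum of paths. -/
theorem sum_derComesh (T : TranslationQuiver) (k : Type) [Field k] {w : T.V}
    (hw : ¬ T.Proj w) {y : T.V} {ι : Type} [Fintype ι] (f : ι → Quiver.Path w y) :
    ∑ β : (u : T.V) × T.Arrow u w,
        derComesh T k hw (sigmaEquiv T hw β) (∑ i, Finsupp.single (f i) (1 : k))
      = ∑ i, meshRel T k hw (f i) := by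
  simp only [derComesh_sigmaEquiv, meshRel, Finsupp.mapDomain_finsetSum,
    Finsupp.mapDomain_single]
  exact Finset.sum_comm

theorem exists_of_sum_single_ne_zero {k ι P : Type} [Field k] [Fintype ι] {g : ι → P} {p : P}
    (h : (∑ i, Finsupp.single (g i) (1 : k)) p ≠ 0) : ∃ i, g i = p := by
  rw [Finsupp.finsetSum_apply] at h
  obtain ⟨i, -, hi⟩ := Finset.exists_ne_zero_of_sum_ne_zero h
  exact ⟨i, by by_contra hne; exact hi (Finsupp.single_eq_of_ne (Ne.symm hne))⟩

theorem sum_single_apply_of_injective {k ι P : Type} [Field k] [Fintype ι] {g : ι → P}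
    (hg : Function.Injective g) (i : ι) :
    (∑ j, Finsupp.single (g j) (1 : k)) (g i) = 1 := by
  classical
  simp [Finsupp.finsetSum_apply, Finsupp.single_apply, hg.eq_iff]

end TranslationQuiver

open TranslationQuiver in
/-- The Bimesh Lemma, part 1.  Here `x = τ w` is non-injective (with
`w = τ⁻¹ x` non-projective), `α₁` is the largest arrow starting at `x` and
ending at a predecessor of `y`, and `S` is the set of relations derived from
the mesh of `x` whose leading basis element is not the leading basis element of
any `s_{α₁}` with `s` a mesh-canonical relation between `τ⁻¹ x` and `y`.
Every relation derived from the mesh of `x` is a linear combination of elements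
of `R^d(τ⁻¹ x, y) ∪ S`. -/
theorem bimesh_lemma_part1 (T : TranslationQuiver) (k : Type) [Field k]
    (w : T.V) (hw : ¬ T.Proj w) (y : T.V)
    (hclosed : ∀ p : Quiver.Path (T.tau ⟨w, hw⟩) y, T.Closed p)
    (hpre : ∀ (p q : Quiver.Path (T.tau ⟨w, hw⟩) y) (r : Quiver.Path y y),
      q = p.comp r → q = p)
    (O : OFam T (T.tau ⟨w, hw⟩)) (hO : IsMeshLex T (T.tau ⟨w, hw⟩) y O)
    (α₁ : OutArrow T (T.tau ⟨w, hw⟩)) (hα₁pred : T.PredOf y α₁.1)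
    (hα₁max : ∀ b : OutArrow T (T.tau ⟨w, hw⟩), T.PredOf y b.1 → b ≠ α₁ →
      O _ Quiver.Path.nil b α₁) :
    ∀ r ∈ MeshAtSet T k hw y,
      r ∈ Submodule.span k
        ({t | ∃ (a : OutArrow T (T.tau ⟨w, hw⟩)) (s : Quiver.Path w y →₀ k),
            s ∈ MeshCanonical T k w y ∧ t = derComesh T k hw a s} ∪
          {r ∈ MeshAtSet T k hw y |
            ¬ ∃ s ∈ MeshCanonical T k w y, ∃ p : Quiver.Path (T.tau ⟨w, hw⟩) y,
              IsLpPath T O r p ∧ IsLpPath T O (derComesh T k hw α₁ s) p}) := by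
  classical
  have main : ∀ (n : ℕ) (γ : {p : Quiver.Path w y // p.length = n}),
      meshRel T k hw γ.1 ∈ Submodule.span k
        ({t | ∃ (a : OutArrow T (T.tau ⟨w, hw⟩)) (s : Quiver.Path w y →₀ k),
            s ∈ MeshCanonical T k w y ∧ t = derComesh T k hw a s} ∪
          {r ∈ MeshAtSet T k hw y |
            ¬ ∃ s ∈ MeshCanonical T k w y, ∃ p : Quiver.Path (T.tau ⟨w, hw⟩) y,
              IsLpPath T O r p ∧ IsLpPath T O (derComesh T k hw α₁ s) p}) := by
    intro n γ
    obtain ⟨β₁, rfl⟩ := (sigmaEquiv T hw).surjective α₁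
    induction γ using (wellFounded_lexLt_comp hO.1 (meshPath T hw β₁) n).induction with
    | _ γ ih =>
    obtain ⟨γ, hγ⟩ := γ
    by_cases hS : ∃ s ∈ MeshCanonical T k w y, ∃ p : Quiver.Path (T.tau ⟨w, hw⟩) y,
        IsLpPath T O (meshRel T k hw γ) p ∧
          IsLpPath T O (derComesh T k hw (sigmaEquiv T hw β₁) s) p
    · obtain ⟨s, hs, p, ⟨hp, -⟩, ⟨hp', hlt⟩⟩ := hS
      obtain ⟨v, hv, γ₁, γ₂, hsum⟩ := id hs
      set g : ((u : T.V) × T.Arrow u v) → Quiver.Path w y :=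
        fun β => (γ₁.comp (meshPath T hv β)).comp γ₂ with hg
      have hginj : Function.Injective g := fun β β' h =>
        meshPath_injective T hv (by simpa [hg] using h)
      have hder : derComesh T k hw (sigmaEquiv T hw β₁) s
          = ∑ β, Finsupp.single ((meshPath T hw β₁).comp (g β)) (1 : k) := by
        rw [derComesh_sigmaEquiv, hsum]
        simp only [Finsupp.mapDomain_finsetSum, Finsupp.mapDomain_single, hg]
      rw [hder] at hp' hlt
      obtain ⟨β, hβ⟩ := exists_of_sum_single_ne_zero hp
      obtain ⟨β₀, hβ₀⟩ := exists_of_sum_single_ne_zero hp'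
      -- the first two arrows of `p` form a path of the mesh, so they can be cancelled
      have hγ₀ : γ = g β₀ :=
        ((Quiver.Path.comp_inj' (by simp [length_meshPath])).1 (hβ.trans hβ₀.symm)).2
      have hid := sum_derComesh T k hw g
      have hsg : s = ∑ β, Finsupp.single (g β) (1 : k) := hsum
      rw [← hsg, ← Finset.add_sum_erase _ (fun β => meshRel T k hw (g β)) (Finset.mem_univ β₀),
        ← hγ₀] at hid
      rw [eq_sub_of_add_eq hid.symm]
      refine Submodule.sub_mem _ (Submodule.sum_mem _ fun β _ => ?_)
        (Submodule.sum_mem _ fun β hβ => ?_)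
      · exact Submodule.subset_span (Or.inl ⟨_, s, hs, rfl⟩)
      · have hne : β ≠ β₀ := Finset.ne_of_mem_erase hβ
        have hlen : (g β).length = n := by
          rw [← hγ, hγ₀]; simp [hg, length_meshPath]
        refine ih ⟨g β, hlen⟩ ?_
        have hcinj : Function.Injective fun β => (meshPath T hw β₁).comp (g β) :=
          (Quiver.Path.comp_injective_right _).comp hginj
        have h1 := hlt ((meshPath T hw β₁).comp (g β))
          (by rw [sum_single_apply_of_injective hcinj β]; exact one_ne_zero)
          (by rw [← hβ₀]; exact fun h => hne (hcinj h))
        rw [← hβ₀, ← hγ₀] at h1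
        exact h1
    · exact Submodule.subset_span (Or.inr ⟨⟨γ, rfl⟩, hS⟩)
  rintro r ⟨γ, rfl⟩
  exact main _ ⟨γ, rfl⟩
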